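/- Fix n ≥ 1 and set δ = 1/√(6n). For v ∈ {−1,1}, let P_v be the probability distribution on {−1,1} with P_v({1}) = (1+vδ)/2, and define f_v : ℝ → ℝ by f_v(θ) = ((1+vδ)/2)·|θ−1| + ((1−vδ)/2)·|θ+1|. Then every (measurable) function θ̂ : {−1,1}ⁿ → ℝ satisfies max over v ∈ {−1,1} of E_{X₁,…,Xₙ i.i.d. P_v}[ f_v(θ̂(X₁,…,Xₙ)) − inf_{θ∈[−1,1]} f_v(θ) ] ≥ 1/(4√(6n)). -/

import Mathlib

/-!
Le Cam's two-point method. With `g_v = f_v - inf f_v ≥ 0`, the triangle inequality gives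
`g_1 + g_{-1} ≥ 2δ` pointwise (`fv_excess_add`), so the two risks add up to at least `2δ · S`,
where `S = ∑ min(p, q)` and `p`, `q` are the two product densities. The product `p q` takes the
same value `((1-δ²)/4)ⁿ` at every sample (`prod_pv_mul`), so Cauchy–Schwarz applied to
`√(min · max)`, together with `∑ max ≤ ∑ (p + q) = 2` and Bernoulli's inequality, gives
`2 S ≥ (1 - δ²)ⁿ ≥ 1 - nδ² = 5/6`. Hence the larger risk is at least `(5/12) δ ≥ δ/4`.
-/

open Finset

/-- `δ = 1/√(6n)`. -/
noncomputable def lcDelta (n : ℕ) : ℝ := 1 / Real.sqrt (6 * n)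

/-- `f_v(θ) = ((1+vδ)/2)|θ-1| + ((1-vδ)/2)|θ+1|`. -/
noncomputable def fv (n : ℕ) (v θ : ℝ) : ℝ :=
  (1 + v * lcDelta n) / 2 * |θ - 1| + (1 - v * lcDelta n) / 2 * |θ + 1|

/-- The probability that `X = x` under `P_v`, where the sample `x ∈ {-1,1}` is
encoded by a boolean (`true ↦ 1`, `false ↦ -1`):
`P_v({1}) = (1+vδ)/2` and `P_v({-1}) = (1-vδ)/2`. -/
noncomputable def pv (n : ℕ) (v : ℝ) (x : Bool) : ℝ :=
  if x then (1 + v * lcDelta n) / 2 else (1 - v * lcDelta n) / 2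

/-- The risk of the estimator `est` under `P_v`: the expectation, over
`X₁,…,Xₙ` i.i.d. `P_v`, of `f_v(est(X₁,…,Xₙ)) - inf_{θ ∈ [-1,1]} f_v(θ)`. -/
noncomputable def lcRisk (n : ℕ) (v : ℝ) (est : (Fin n → Bool) → ℝ) : ℝ :=
  ∑ xs : Fin n → Bool, (∏ i, pv n v (xs i)) *
    (fv n v (est xs) - sInf (fv n v '' Set.Icc (-1 : ℝ) 1))

theorem lcDelta_pos {n : ℕ} (hn : 1 ≤ n) : 0 < lcDelta n := by
  have : (1 : ℝ) ≤ n := by exact_mod_cast hn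
  unfold lcDelta
  positivity

theorem lcDelta_sq {n : ℕ} (hn : 1 ≤ n) : n * lcDelta n ^ 2 = 1 / 6 := by
  have : (1 : ℝ) ≤ n := by exact_mod_cast hn
  unfold lcDelta
  rw [div_pow, Real.sq_sqrt (by positivity)]
  field_simp

theorem lcDelta_le_one {n : ℕ} (hn : 1 ≤ n) : lcDelta n ≤ 1 := by
  have h1 : (1 : ℝ) ≤ n := by exact_mod_cast hn
  have h2 := lcDelta_sq hn
  nlinarith [lcDelta_pos hn, sq_nonneg (lcDelta n)]

/-- Only the upper bound `inf f_v ≤ f_v(v) = 1 - δ` on the infimum is needed. -/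
theorem sInf_fv_le {n : ℕ} (hn : 1 ≤ n) {v : ℝ} (hv : v = 1 ∨ v = -1) :
    sInf (fv n v '' Set.Icc (-1 : ℝ) 1) ≤ 1 - lcDelta n := by
  have h0 := lcDelta_pos hn
  have h1 := lcDelta_le_one hn
  apply csInf_le
  · refine ⟨0, ?_⟩
    rintro _ ⟨θ, -, rfl⟩
    have ha : 0 ≤ 1 + v * lcDelta n := by rcases hv with rfl | rfl <;> linarith
    have hb : 0 ≤ 1 - v * lcDelta n := by rcases hv with rfl | rfl <;> linarith
    unfold fv
    positivity
  · refine ⟨v, ?_, ?_⟩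
    · rcases hv with rfl | rfl <;> norm_num
    · unfold fv
      rcases hv with rfl | rfl <;> norm_num <;> ring

theorem fv_excess_nonneg {n : ℕ} (hn : 1 ≤ n) {v : ℝ} (hv : v = 1 ∨ v = -1) (θ : ℝ) :
    0 ≤ fv n v θ - sInf (fv n v '' Set.Icc (-1 : ℝ) 1) := by
  have h0 := lcDelta_pos hn
  have h1 := lcDelta_le_one hn
  have h2 := sInf_fv_le hn hv
  suffices 1 - lcDelta n ≤ fv n v θ by linarith
  unfold fv
  rcases hv with rfl | rfl <;>
    rcases abs_cases (θ - 1) with ⟨ha, _⟩ | ⟨ha, _⟩ <;>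
    rcases abs_cases (θ + 1) with ⟨hb, _⟩ | ⟨hb, _⟩ <;>
    rw [ha, hb] <;> nlinarith

/-- No single `θ` is nearly optimal for both `f_1` and `f_{-1}`. -/
theorem fv_excess_add {n : ℕ} (hn : 1 ≤ n) (θ : ℝ) :
    2 * lcDelta n ≤ (fv n 1 θ - sInf (fv n 1 '' Set.Icc (-1 : ℝ) 1)) +
      (fv n (-1) θ - sInf (fv n (-1) '' Set.Icc (-1 : ℝ) 1)) := by
  have h1 := sInf_fv_le hn (v := 1) (Or.inl rfl)
  have h2 := sInf_fv_le hn (v := -1) (Or.inr rfl)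
  have h3 : fv n 1 θ + fv n (-1) θ = |θ - 1| + |θ + 1| := by unfold fv; ring
  linarith [neg_abs_le (θ - 1), le_abs_self (θ + 1)]

theorem pv_nonneg {n : ℕ} (hn : 1 ≤ n) {v : ℝ} (hv : v = 1 ∨ v = -1) (x : Bool) :
    0 ≤ pv n v x := by
  have h0 := lcDelta_pos hn
  have h1 := lcDelta_le_one hn
  rcases hv with rfl | rfl <;> cases x <;> simp [pv] <;> linarith

theorem sum_prod_pv (n : ℕ) (v : ℝ) : ∑ xs : Fin n → Bool, ∏ i, pv n v (xs i) = 1 := by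
  have h := Finset.prod_univ_sum (fun _ : Fin n => (Finset.univ : Finset Bool))
    (fun _ x => pv n v x)
  rw [Fintype.piFinset_univ] at h
  rw [← h]
  refine Finset.prod_eq_one fun i _ => ?_
  simp [pv]
  ring

/-- The likelihoods under `P_1` and `P_{-1}` have a product that does not depend on the sample. -/
theorem prod_pv_mul (n : ℕ) (xs : Fin n → Bool) :
    (∏ i, pv n 1 (xs i)) * ∏ i, pv n (-1) (xs i) = ((1 - lcDelta n ^ 2) / 4) ^ n := by
  have h : ∀ x : Bool, pv n 1 x * pv n (-1) x = (1 - lcDelta n ^ 2) / 4 := by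
    intro x
    cases x <;> simp [pv] <;> ring
  rw [← Finset.prod_mul_distrib]
  simp [h, div_pow]

/-- The affinity (one minus the total variation distance) of the two product measures is at
least `5/12`. -/
theorem affinity_ge {n : ℕ} (hn : 1 ≤ n) :
    5 / 12 ≤ ∑ xs : Fin n → Bool, min (∏ i, pv n 1 (xs i)) (∏ i, pv n (-1) (xs i)) := by
  have hδ0 := lcDelta_pos hn
  have hδ1 := lcDelta_le_one hn
  have hc : 0 ≤ ((1 - lcDelta n ^ 2) / 4) ^ n := by
    have : 0 ≤ 1 - lcDelta n ^ 2 := by nlinarith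
    positivity
  have hp (xs : Fin n → Bool) : 0 ≤ ∏ i, pv n 1 (xs i) :=
    Finset.prod_nonneg fun i _ => pv_nonneg hn (Or.inl rfl) _
  have hq (xs : Fin n → Bool) : 0 ≤ ∏ i, pv n (-1) (xs i) :=
    Finset.prod_nonneg fun i _ => pv_nonneg hn (Or.inr rfl) _
  have hCS := Finset.sum_sq_le_sum_mul_sum_of_sq_le_mul (Finset.univ : Finset (Fin n → Bool))
    (r := fun _ => Real.sqrt (((1 - lcDelta n ^ 2) / 4) ^ n))
    (f := fun xs => min (∏ i, pv n 1 (xs i)) (∏ i, pv n (-1) (xs i)))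
    (g := fun xs => max (∏ i, pv n 1 (xs i)) (∏ i, pv n (-1) (xs i)))
    (fun xs _ => le_min (hp xs) (hq xs))
    (fun xs _ => le_max_of_le_left (hp xs))
    (fun xs _ => by rw [Real.sq_sqrt hc, min_mul_max, prod_pv_mul])
  have hL : (∑ _xs : Fin n → Bool, Real.sqrt (((1 - lcDelta n ^ 2) / 4) ^ n)) ^ 2
      = (1 - lcDelta n ^ 2) ^ n := by
    rw [Finset.sum_const, nsmul_eq_mul, mul_pow, Real.sq_sqrt hc, Finset.card_univ]
    simp only [Fintype.card_fun, Fintype.card_bool, Fintype.card_fin, Nat.cast_pow,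
      Nat.cast_ofNat]
    rw [← pow_mul, mul_comm n 2, pow_mul, ← mul_pow]
    congr 1
    ring
  have hB : 5 / 6 ≤ (1 - lcDelta n ^ 2) ^ n := by
    have h := one_add_mul_le_pow (a := -lcDelta n ^ 2) (by nlinarith) n
    have h2 := lcDelta_sq hn
    rw [← sub_eq_add_neg] at h
    linarith
  have hmax : ∑ xs : Fin n → Bool, max (∏ i, pv n 1 (xs i)) (∏ i, pv n (-1) (xs i)) ≤ 2 := by
    calc _ ≤ ∑ xs : Fin n → Bool, ((∏ i, pv n 1 (xs i)) + ∏ i, pv n (-1) (xs i)) :=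
          Finset.sum_le_sum fun xs _ => max_le (by linarith [hq xs]) (by linarith [hp xs])
      _ = 2 := by rw [Finset.sum_add_distrib, sum_prod_pv, sum_prod_pv]; norm_num
  have hS : 0 ≤ ∑ xs : Fin n → Bool, min (∏ i, pv n 1 (xs i)) (∏ i, pv n (-1) (xs i)) :=
    Finset.sum_nonneg fun xs _ => le_min (hp xs) (hq xs)
  rw [hL] at hCS
  nlinarith [mul_le_mul_of_nonneg_left hmax hS]

theorem statement17 (n : ℕ) (hn : 1 ≤ n) (est : (Fin n → Bool) → ℝ) :
    1 / (4 * Real.sqrt (6 * n)) ≤ max (lcRisk n 1 est) (lcRisk n (-1) est) := by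
  have hδ0 := lcDelta_pos hn
  have hA := affinity_ge hn
  have hsum : (∑ xs : Fin n → Bool, min (∏ i, pv n 1 (xs i)) (∏ i, pv n (-1) (xs i))) *
      (2 * lcDelta n) ≤ lcRisk n 1 est + lcRisk n (-1) est := by
    unfold lcRisk
    rw [← Finset.sum_add_distrib, Finset.sum_mul]
    refine Finset.sum_le_sum fun xs _ => ?_
    have hp : 0 ≤ ∏ i, pv n 1 (xs i) :=
      Finset.prod_nonneg fun i _ => pv_nonneg hn (Or.inl rfl) _
    have hq : 0 ≤ ∏ i, pv n (-1) (xs i) :=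
      Finset.prod_nonneg fun i _ => pv_nonneg hn (Or.inr rfl) _
    have h1 := mul_le_mul_of_nonneg_right
      (min_le_left (∏ i, pv n 1 (xs i)) (∏ i, pv n (-1) (xs i)))
      (fv_excess_nonneg hn (v := 1) (Or.inl rfl) (est xs))
    have h2 := mul_le_mul_of_nonneg_right
      (min_le_right (∏ i, pv n 1 (xs i)) (∏ i, pv n (-1) (xs i)))
      (fv_excess_nonneg hn (v := -1) (Or.inr rfl) (est xs))
    have h3 := mul_le_mul_of_nonneg_left (fv_excess_add hn (est xs)) (le_min hp hq)
    linarith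
  have hδ : 1 / (4 * Real.sqrt (6 * n)) = lcDelta n / 4 := by
    unfold lcDelta
    rw [div_div, mul_comm]
  rw [hδ]
  have h := mul_le_mul_of_nonneg_right hA (by positivity : 0 ≤ 2 * lcDelta n)
  linarith [le_max_left (lcRisk n 1 est) (lcRisk n (-1) est),
    le_max_right (lcRisk n 1 est) (lcRisk n (-1) est)]
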